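/- Let a and b be positive integers with b > a. A graph G contains an [a,b]-factor if and only if for every subset S ⊆ V(G), a|W| - Σ_{v ∈ W} d_{G-S}(v) ≤ b|S|, where W = {v ∈ V(G)\S : d_{G-S}(v) < a}. -/

import Mathlib

open Finset Matrix

namespace SimpleGraph

variable {V : Type*} [Fintype V] [DecidableEq V]

lemma isHermitian_adjMatrix' (G : SimpleGraph V) [DecidableRel G.Adj] :
    (G.adjMatrix ℝ).IsHermitian := by
  rw [Matrix.IsHermitian, conjTranspose_eq_transpose_of_trivial, isSymm_adjMatrix]

/-- The spectral radius (largest adjacency eigenvalue) of a finite simple graph. -/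
noncomputable def spectralRadius (G : SimpleGraph V) : ℝ :=
  letI := Classical.decRel G.Adj
  ⨆ i, (isHermitian_adjMatrix' G).eigenvalues i

/-- `G` has an `[a,b]`-factor: a spanning subgraph all of whose degrees lie in `[a,b]`. -/
def HasABFactor (G : SimpleGraph V) (a b : ℕ) : Prop :=
  ∃ H : SimpleGraph V, H ≤ G ∧ ∀ v : V,
    letI := Classical.decRel H.Adj
    a ≤ H.degree v ∧ H.degree v ≤ b

/-- `G` has a fractional `[a,b]`-factor: a weighting of the edges by values in `[0,1]`
such that the total weight at every vertex lies in `[a,b]`. -/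
def HasFractionalABFactor (G : SimpleGraph V) (a b : ℕ) : Prop :=
  letI := Classical.decRel G.Adj
  ∃ h : Sym2 V → ℝ, (∀ e ∈ G.edgeSet, 0 ≤ h e ∧ h e ≤ 1) ∧
    ∀ v : V, (a : ℝ) ≤ ∑ e ∈ G.incidenceFinset v, h e ∧
      ∑ e ∈ G.incidenceFinset v, h e ≤ (b : ℝ)

end SimpleGraph

/-- `K_a ∨ (K_{n-a-b-1} ∪ (b+1)K_1)`, with vertices `0,…,a-1` forming the `K_a`,
vertices `a,…,n-b-2` forming the `K_{n-a-b-1}`, and the last `b+1` vertices independent. -/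
def baseGraph (n a b : ℕ) : SimpleGraph (Fin n) :=
  SimpleGraph.fromRel (fun i j => (i : ℕ) < a ∨ ((i : ℕ) < n - b - 1 ∧ (j : ℕ) < n - b - 1))

/-- The graph `H_n^{a,b}`: `baseGraph n a b` together with `a-1` extra edges joining the
vertex `n-b-1` (a fixed vertex of the independent part `(b+1)K_1`) to the `a-1`
vertices `a,…,2a-2` of the `K_{n-a-b-1}` part. -/
def Hgraph (n a b : ℕ) : SimpleGraph (Fin n) :=
  SimpleGraph.fromRel (fun i j => (i : ℕ) < a ∨ ((i : ℕ) < n - b - 1 ∧ (j : ℕ) < n - b - 1) ∨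
    ((i : ℕ) = n - b - 1 ∧ a ≤ (j : ℕ) ∧ (j : ℕ) < 2 * a - 1))

/-- The family `𝒢_n^{a,b}`: graphs obtained from `baseGraph n a b` by adding `a-1` edges
between the clique part `{a,…,n-b-2}` and the independent part `{n-b-1,…,n-1}`. -/
def GFamily (n a b : ℕ) (G : SimpleGraph (Fin n)) : Prop :=
  ∃ F : Finset (Fin n × Fin n), F.card = a - 1 ∧
    (∀ p ∈ F, a ≤ (p.1 : ℕ) ∧ (p.1 : ℕ) < n - b - 1 ∧ n - b - 1 ≤ (p.2 : ℕ)) ∧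
    G = baseGraph n a b ⊔ SimpleGraph.fromEdgeSet ((fun p : Fin n × Fin n => s(p.1, p.2)) '' F)

/-!
The argument works for degree bounds `g < f` that vary with the vertex. Take a spanning subgraph
`H ≤ G` with degrees at most `f` whose total shortfall below `g` is minimal, and suppose that the
degree of `v` is below `g v`. Follow the walks from `v` that alternate between edges of `G \ H` and
edges of `H`. If such a walk reaches a vertex that tolerates the resulting change of its degree,
then switching the edges along a shortest such walk lowers the shortfall; because `g < f`, a vertex
visited twice never obstructs this. Otherwise, let `T` be the vertices that cannot compensate the
loss of an edge and `S` those that cannot compensate the gain of one. All edges of `G` from `T` to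
the complement of `S` lie in `H`, all edges of `H` at `S` go to `T`, and counting the edges of `H`
between `S` and `T` in two ways shows that `S` violates the inequality.
-/

/-- A `(g, f)`-factor of `G`: a spanning subgraph whose degree at each vertex `v` lies between
`g v` and `f v`. An `[a, b]`-factor is the case of constant `g` and `f`. -/
def HasDegreeFactor {V : Type*} [Fintype V] (G : SimpleGraph V) (g f : V → ℕ) : Prop :=
  ∃ H : SimpleGraph V, H ≤ G ∧ ∀ v : V,
    letI := Classical.decRel H.Adj
    g v ≤ H.degree v ∧ H.degree v ≤ f v

lemma hasABFactor_iff_hasDegreeFactor {V : Type*} [Fintype V] {G : SimpleGraph V} {a b : ℕ} :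
    G.HasABFactor a b ↔ HasDegreeFactor G (fun _ ↦ a) (fun _ ↦ b) :=
  Iff.rfl

namespace HasDegreeFactor

variable {V : Type*}

lemma sum_le_sum_filter_of_nonpos_of_nonneg {ι R : Type*} [Fintype ι] [AddCommMonoid R]
    [PartialOrder R] [IsOrderedAddMonoid R] {x : ι → R} {T : Finset ι} {p : ι → Prop}
    [DecidablePred p] (hnonpos : ∀ i ∈ T, ¬ p i → x i ≤ 0) (hnonneg : ∀ i, p i → 0 ≤ x i) :
    ∑ i ∈ T, x i ≤ ∑ i with p i, x i :=
  calc ∑ i ∈ T, x i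
      ≤ ∑ i ∈ T, if p i then x i else 0 := sum_le_sum fun i hi ↦ by grind
    _ = ∑ i ∈ T with p i, x i := (sum_filter ..).symm
    _ ≤ ∑ i with p i, x i :=
        sum_le_sum_of_subset_of_nonneg (filter_subset_filter p (subset_univ T)) fun i hi _ ↦
          hnonneg i (mem_filter.1 hi).2

section Counting

variable [Fintype V] [DecidableEq V] {G H : SimpleGraph V} [DecidableRel G.Adj] [DecidableRel H.Adj]

variable (H) in
lemma sum_card_neighborFinset_inter_comm (S T : Finset V) :
    ∑ t ∈ T, #(H.neighborFinset t ∩ S) = ∑ s ∈ S, #(H.neighborFinset s ∩ T) := by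
  convert sum_card_bipartiteAbove_eq_sum_card_bipartiteBelow (s := T) (t := S) H.Adj using 3
  · ext; simp [bipartiteAbove, and_comm]
  · ext; simp [bipartiteBelow, and_comm, H.adj_comm]

variable (H) in
lemma card_neighborFinset_inter_add_card_sdiff (S : Finset V) (v : V) :
    #(H.neighborFinset v ∩ S) + #(H.neighborFinset v \ S) = H.degree v :=
  card_inter_add_card_sdiff _ _

lemma sum_sub_card_le_sum_of_degree_bounds {g f : V → ℕ} (hHG : H ≤ G) (S T : Finset V)
    (hT : ∀ t ∈ T, g t ≤ H.degree t) (hS : ∀ s ∈ S, H.degree s ≤ f s) :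
    ∑ t ∈ T, ((g t : ℤ) - #(G.neighborFinset t \ S)) ≤ ∑ s ∈ S, (f s : ℤ) := by
  calc ∑ t ∈ T, ((g t : ℤ) - #(G.neighborFinset t \ S))
      ≤ ∑ t ∈ T, (#(H.neighborFinset t ∩ S) : ℤ) := by
        refine sum_le_sum fun t ht ↦ ?_
        have hsub : #(H.neighborFinset t \ S) ≤ #(G.neighborFinset t \ S) := by
          gcongr
          exact fun w hw ↦ by simpa using hHG (by simpa using hw)
        have := card_neighborFinset_inter_add_card_sdiff H S t
        have := hT t ht
        omega
    _ = ∑ s ∈ S, (#(H.neighborFinset s ∩ T) : ℤ) := by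
        exact_mod_cast sum_card_neighborFinset_inter_comm H S T
    _ ≤ ∑ s ∈ S, (f s : ℤ) := by
        gcongr with s hs
        exact (card_le_card inter_subset_left).trans (hS s hs)

lemma sum_lt_sum_sub_card_of_neighborFinset_subset {g f : V → ℕ} {S T : Finset V}
    (hGT : ∀ t ∈ T, G.neighborFinset t \ S ⊆ H.neighborFinset t)
    (hHS : ∀ s ∈ S, H.neighborFinset s ⊆ T)
    (hS : ∀ s ∈ S, f s ≤ H.degree s) (hT : ∀ t ∈ T, H.degree t ≤ g t)
    {v : V} (hvT : v ∈ T) (hv : H.degree v < g v) :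
    ∑ s ∈ S, (f s : ℤ) < ∑ t ∈ T, ((g t : ℤ) - #(G.neighborFinset t \ S)) := by
  have hdeg (t) (ht : t ∈ T) :
      #(H.neighborFinset t ∩ S) + #(G.neighborFinset t \ S) ≤ H.degree t := by
    have hsub : #(G.neighborFinset t \ S) ≤ #(H.neighborFinset t \ S) :=
      card_le_card (subset_sdiff.2 ⟨hGT t ht, sdiff_disjoint⟩)
    have := card_neighborFinset_inter_add_card_sdiff H S t
    omega
  calc ∑ s ∈ S, (f s : ℤ)
      ≤ ∑ s ∈ S, (#(H.neighborFinset s ∩ T) : ℤ) := by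
        gcongr with s hs
        rw [inter_eq_left.2 (hHS s hs)]
        exact hS s hs
    _ = ∑ t ∈ T, (#(H.neighborFinset t ∩ S) : ℤ) := by
        exact_mod_cast (sum_card_neighborFinset_inter_comm H S T).symm
    _ < ∑ t ∈ T, ((g t : ℤ) - #(G.neighborFinset t \ S)) := by
        refine sum_lt_sum (fun t ht ↦ ?_) ⟨v, hvT, ?_⟩
        · have := hdeg t ht
          have := hT t ht
          omega
        · have := hdeg v hvT
          omega

end Counting

section Degree

variable {H K : SimpleGraph V} {u v w : V}

lemma degree_sup_of_disjoint {_ : Fintype ((H ⊔ K).neighborSet w)} [Fintype (H.neighborSet w)]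
    [Fintype (K.neighborSet w)] (h : Disjoint H K) :
    (H ⊔ K).degree w = H.degree w + K.degree w := by
  rw [← SimpleGraph.card_neighborFinset_eq_degree, SimpleGraph.neighborFinset_sup_of_disjoint _ h,
    card_disjUnion]
  rfl

lemma degree_edge [DecidableEq V] [Fintype ((SimpleGraph.edge u v).neighborSet w)] (h : u ≠ v) :
    (SimpleGraph.edge u v).degree w = if w = u ∨ w = v then 1 else 0 := by
  have hnbr : (SimpleGraph.edge u v).neighborFinset w =
      if w = u then {v} else if w = v then {u} else ∅ := by
    ext x
    simp only [SimpleGraph.mem_neighborFinset]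
    grind
  rw [← SimpleGraph.card_neighborFinset_eq_degree, hnbr]
  grind

lemma degree_sup_edge [DecidableEq V] {_ : Fintype ((H ⊔ SimpleGraph.edge u v).neighborSet w)}
    [Fintype (H.neighborSet w)] (huv : u ≠ v) (hnuv : ¬ H.Adj u v) :
    (H ⊔ SimpleGraph.edge u v).degree w = H.degree w + if w = u ∨ w = v then 1 else 0 := by
  have : Finite ((SimpleGraph.edge u v).neighborSet w) :=
    Finite.Set.subset _ (SimpleGraph.neighborSet_mono (le_sup_right (a := H)) w)
  have := Fintype.ofFinite ((SimpleGraph.edge u v).neighborSet w)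
  rw [degree_sup_of_disjoint ((SimpleGraph.disjoint_edge H).2 hnuv), degree_edge huv]

end Degree

section Switch

variable {H : SimpleGraph V} {u v w x y : V}

/-- The graph obtained from `H` by switching along the walk `u`, `v`, `w`: the edge `uv` is added
and the edge `vw` is removed. Meant for `uv` outside `H` and `vw` in `H`, in which case one unit of
degree moves from `w` to `u`. -/
def switch (H : SimpleGraph V) (u v w : V) : SimpleGraph V :=
  (H ⊔ SimpleGraph.edge u v) \ SimpleGraph.edge v w

lemma switch_le {G : SimpleGraph V} (hHG : H ≤ G) (huv : G.Adj u v) : switch H u v w ≤ G :=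
  sdiff_le.trans (sup_le hHG ((SimpleGraph.edge_le_iff G).2 (.inr huv)))

lemma adj_of_switch_adj (hxu : x ≠ u) (hxv : x ≠ v) (h : (switch H u v w).Adj x y) :
    H.Adj x y := by
  grind [switch, SimpleGraph.sdiff_adj]

lemma switch_adj_of_adj (hxv : x ≠ v) (hxw : x ≠ w) (h : H.Adj x y) :
    (switch H u v w).Adj x y := by
  grind [switch, SimpleGraph.sdiff_adj]

open scoped Classical in
lemma degree_switch [Fintype V] (huv : u ≠ v) (hnuv : ¬ H.Adj u v) (hvw : H.Adj v w) (x : V) :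
    (switch H u v w).degree x + (if x = w then 1 else 0) =
      H.degree x + (if x = u then 1 else 0) := by
  have hsup : switch H u v w ⊔ SimpleGraph.edge v w = H ⊔ SimpleGraph.edge u v :=
    sdiff_sup_cancel (((SimpleGraph.edge_le_iff H).2 (.inr hvw)).trans le_sup_left)
  have hdeg : (switch H u v w ⊔ SimpleGraph.edge v w).degree x =
      (H ⊔ SimpleGraph.edge u v).degree x := by
    congr!
  have hnvw : ¬ (switch H u v w).Adj v w :=
    (SimpleGraph.disjoint_edge _).1 disjoint_sdiff_self_left
  rw [degree_sup_edge hvw.ne hnvw, degree_sup_edge huv hnuv] at hdeg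
  have := hvw.ne
  have := H.ne_of_adj_of_not_adj hvw.symm hnuv
  grind

end Switch

section Augmentation

variable [Fintype V] {G H H' : SimpleGraph V} {g f : V → ℕ} {u v w : V}

open scoped Classical in
/-- A spanning subgraph of `G` that respects the upper degree bounds of a `(g, f)`-factor. -/
structure IsPartialFactor (G : SimpleGraph V) (f : V → ℕ) (H : SimpleGraph V) : Prop where
  le : H ≤ G
  degree_le (v : V) : H.degree v ≤ f v

open scoped Classical in
/-- The total amount by which the degrees of `H` fall short of the lower bounds `g`; the truncated
subtraction counts a vertex that meets its bound as `0`. -/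
noncomputable def deficiency (g : V → ℕ) (H : SimpleGraph V) : ℕ :=
  ∑ v, (g v - H.degree v)

open scoped Classical in
lemma deficiency_lt_deficiency (hlow : H.degree v < g v) (hlt : H.degree v < H'.degree v)
    (hle : ∀ w, g w - H'.degree w ≤ g w - H.degree w) : deficiency g H' < deficiency g H :=
  sum_lt_sum (fun w _ ↦ hle w) ⟨v, mem_univ v, by omega⟩

open scoped Classical in
lemma deficiency_switch_le (huv : u ≠ v) (hnuv : ¬ H.Adj u v) (hvw : H.Adj v w)
    (hu : H.degree u < g u) : deficiency g (switch H u v w) ≤ deficiency g H := by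
  have hsum : ∑ x, (g x - (switch H u v w).degree x + if x = u then 1 else 0) ≤
      ∑ x, (g x - H.degree x + if x = w then 1 else 0) := by
    refine sum_le_sum fun x _ ↦ ?_
    have := degree_switch huv hnuv hvw x
    grind
  simpa [sum_add_distrib, deficiency] using hsum

open scoped Classical in
lemma deficiency_switch_lt (huv : u ≠ v) (hnuv : ¬ H.Adj u v) (hvw : H.Adj v w)
    (hu : H.degree u < g u) (hw : g w < H.degree w) :
    deficiency g (switch H u v w) < deficiency g H := by
  have hdeg := degree_switch huv hnuv hvw
  refine deficiency_lt_deficiency hu ?_ fun x ↦ ?_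
  · have := hdeg u
    have := H.ne_of_adj_of_not_adj hvw.symm hnuv
    grind
  · have := hdeg x
    grind

open scoped Classical in
lemma deficiency_sup_edge_lt (huv : u ≠ v) (hnuv : ¬ H.Adj u v) (hu : H.degree u < g u) :
    deficiency g (H ⊔ SimpleGraph.edge u v) < deficiency g H := by
  refine deficiency_lt_deficiency hu ?_ fun x ↦ ?_ <;> rw [degree_sup_edge huv hnuv] <;> grind

open scoped Classical in
lemma IsPartialFactor.sup_edge (hH : IsPartialFactor G f H) (huv : G.Adj u v)
    (hnuv : ¬ H.Adj u v) (hu : H.degree u < f u) (hv : H.degree v < f v) :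
    IsPartialFactor G f (H ⊔ SimpleGraph.edge u v) where
  le := sup_le hH.le ((SimpleGraph.edge_le_iff G).2 (.inr huv))
  degree_le x := by
    rw [degree_sup_edge huv.ne hnuv]
    have := hH.degree_le x
    grind

open scoped Classical in
lemma IsPartialFactor.switch (hH : IsPartialFactor G f H) (huv : G.Adj u v)
    (hnuv : ¬ H.Adj u v) (hvw : H.Adj v w) (hu : H.degree u < f u) :
    IsPartialFactor G f (switch H u v w) where
  le := switch_le hH.le huv
  degree_le x := by
    have := degree_switch huv.ne hnuv hvw x
    have := hH.degree_le x
    grind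

open scoped Classical in
mutual

/-- In a subgraph `H` of `G`, the loss of an edge at `v` can be compensated along an alternating
walk with fewer than `n` edges: either `v` lies above its lower bound `g v`, or `v` gains an edge of
`G` outside `H` whose other end can in turn absorb that gain. -/
def AbsorbsLoss (G : SimpleGraph V) (g f : V → ℕ) (H : SimpleGraph V) : ℕ → V → Prop
  | 0, _ => False
  | n + 1, v => g v < H.degree v ∨ ∃ w, G.Adj v w ∧ ¬ H.Adj v w ∧ AbsorbsGain G g f H n w

/-- The counterpart of `AbsorbsLoss` for the gain of an edge at `v`: either `v` lies below its upper
bound `f v`, or `v` gives up an edge of `H` whose other end can absorb that loss. -/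
def AbsorbsGain (G : SimpleGraph V) (g f : V → ℕ) (H : SimpleGraph V) : ℕ → V → Prop
  | 0, _ => False
  | n + 1, v => H.degree v < f v ∨ ∃ w, H.Adj v w ∧ AbsorbsLoss G g f H n w

end

lemma absorbs_succ (n : ℕ) : ∀ v,
    (AbsorbsLoss G g f H n v → AbsorbsLoss G g f H (n + 1) v) ∧
      (AbsorbsGain G g f H n v → AbsorbsGain G g f H (n + 1) v) := by
  induction n with
  | zero => simp [AbsorbsLoss, AbsorbsGain]
  | succ n ih =>
    refine fun v ↦ ⟨Or.imp_right ?_, Or.imp_right ?_⟩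
    · exact fun ⟨w, hvw, hnvw, hw⟩ ↦ ⟨w, hvw, hnvw, (ih w).2 hw⟩
    · exact fun ⟨w, hvw, hw⟩ ↦ ⟨w, hvw, (ih w).1 hw⟩

-- Only the walks through a switched edge have to be rerouted. The ones through `u`, and those that
-- remove an edge at `v`, would give a shorter walk from `u`; the others can stop at `v` or `w`,
-- whose degree bounds are slack after the switch because `g < f`.
open scoped Classical in
lemma absorbs_switch (hgf : ∀ v, g v < f v) (huv : G.Adj u v) (hnuv : ¬ H.Adj u v)
    (hvw : H.Adj v w) (hu : H.degree u < g u) (hv : f v ≤ H.degree v) (hw : H.degree w ≤ g w)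
    (n : ℕ) (hmin : ¬ AbsorbsLoss G g f H (n + 1) u) : ∀ x,
    (AbsorbsLoss G g f H n x → AbsorbsLoss G g f (switch H u v w) n x) ∧
      (AbsorbsGain G g f H n x → AbsorbsGain G g f (switch H u v w) n x) := by
  have hdeg := degree_switch huv.ne hnuv hvw
  induction n with
  | zero => simp [AbsorbsLoss, AbsorbsGain]
  | succ n ih =>
    have hmin' : ¬ AbsorbsLoss G g f H (n + 1) u := mt (absorbs_succ (n + 1) u).1 hmin
    specialize ih hmin'
    refine fun x ↦ ⟨?_, ?_⟩
    · rintro (hx | ⟨y, hxy, hnxy, hy⟩)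
      · left
        grind
      obtain rfl | hxv := eq_or_ne x v
      · left
        grind
      have hxu : x ≠ u := by rintro rfl; exact hmin' (.inr ⟨y, hxy, hnxy, hy⟩)
      exact .inr ⟨y, hxy, mt (adj_of_switch_adj hxu hxv) hnxy, (ih y).2 hy⟩
    · rintro (hx | ⟨y, hxy, hy⟩)
      · left
        grind
      obtain rfl | hxw := eq_or_ne x w
      · left
        grind
      have hxv : x ≠ v := by
        rintro rfl
        exact hmin (.inr ⟨x, huv, hnuv, .inr ⟨y, hxy, hy⟩⟩)
      exact .inr ⟨y, switch_adj_of_adj hxv hxw hxy, (ih y).1 hy⟩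

open scoped Classical in
lemma not_absorbsLoss_of_minimalFor (hgf : ∀ v, g v < f v) (n : ℕ) :
    ∀ {H : SimpleGraph V} {u : V}, MinimalFor (IsPartialFactor G f) (deficiency g) H →
      H.degree u < g u → ¬ AbsorbsLoss G g f H n u := by
  induction n with
  | zero => simp [AbsorbsLoss]
  | succ n ih =>
    rintro H u hH hu (hu' | ⟨v, huv, hnuv, hv⟩)
    · exact hu.not_gt hu'
    have huf : H.degree u < f u := hu.trans (hgf u)
    have hvf : f v ≤ H.degree v := by
      by_contra! hv
      exact hH.not_prop_of_lt (deficiency_sup_edge_lt huv.ne hnuv hu)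
        (hH.prop.sup_edge huv hnuv huf hv)
    cases n with
    | zero => exact hv
    | succ n =>
      obtain hv | ⟨w, hvw, hw⟩ := hv
      · exact hvf.not_gt hv
      have hswitch : IsPartialFactor G f (switch H u v w) := hH.prop.switch huv hnuv hvw huf
      have hwg : H.degree w ≤ g w := by
        by_contra! hw
        exact hH.not_prop_of_lt (deficiency_switch_lt huv.ne hnuv hvw hu hw) hswitch
      have hminSwitch : MinimalFor (IsPartialFactor G f) (deficiency g) (switch H u v w) :=
        ⟨hswitch, fun K hK _ ↦ (deficiency_switch_le huv.ne hnuv hvw hu).trans (hH.le hK)⟩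
      have hwSwitch : (switch H u v w).degree w < g w := by
        have := degree_switch huv.ne hnuv hvw w
        have := H.ne_of_adj_of_not_adj hvw.symm hnuv
        grind
      exact ih hminSwitch hwSwitch <| (absorbs_succ n w).1 <|
        (absorbs_switch hgf huv hnuv hvw hu hvf hwg n (ih hH hu) w).1 hw

open scoped Classical in
lemma exists_sum_lt_sum_sub_card_of_minimalFor [DecidableEq V] [DecidableRel G.Adj]
    (hgf : ∀ v, g v < f v)
    (hH : MinimalFor (IsPartialFactor G f) (deficiency g) H) (hv : H.degree v < g v) :
    ∃ S : Finset V, ∑ s ∈ S, (f s : ℤ) <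
      ∑ t with t ∉ S ∧ #(G.neighborFinset t \ S) < g t,
        ((g t : ℤ) - #(G.neighborFinset t \ S)) := by
  let S : Finset V := {s | ∀ n, ¬ AbsorbsGain G g f H n s}
  let T : Finset V := {t | ∀ n, ¬ AbsorbsLoss G g f H n t}
  have hmemS {s} : s ∈ S ↔ ∀ n, ¬ AbsorbsGain G g f H n s := mem_filter_univ s
  have hmemT {t} : t ∈ T ↔ ∀ n, ¬ AbsorbsLoss G g f H n t := mem_filter_univ t
  have hS (s) (hs : s ∈ S) : f s ≤ H.degree s := not_lt.1 fun h ↦ hmemS.1 hs 1 (.inl h)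
  have hT (t) (ht : t ∈ T) : H.degree t ≤ g t := not_lt.1 fun h ↦ hmemT.1 ht 1 (.inl h)
  have hGT (t) (ht : t ∈ T) : G.neighborFinset t \ S ⊆ H.neighborFinset t := by
    intro w hw
    rw [mem_sdiff, SimpleGraph.mem_neighborFinset] at hw
    rw [SimpleGraph.mem_neighborFinset]
    by_contra hntw
    exact hw.2 <| hmemS.2 fun n hn ↦ hmemT.1 ht (n + 1) (.inr ⟨w, hw.1, hntw, hn⟩)
  have hHS (s) (hs : s ∈ S) : H.neighborFinset s ⊆ T := by
    intro w hw
    rw [SimpleGraph.mem_neighborFinset] at hw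
    exact hmemT.2 fun n hn ↦ hmemS.1 hs (n + 1) (.inr ⟨w, hw, hn⟩)
  have hvT : v ∈ T := hmemT.2 fun n ↦ not_absorbsLoss_of_minimalFor hgf n hH hv
  have hTS (t) (ht : t ∈ T) : t ∉ S := fun hs ↦
    ((hT t ht).trans_lt (hgf t)).not_ge (hS t hs)
  refine ⟨S, (sum_lt_sum_sub_card_of_neighborFinset_subset hGT hHS hS hT hvT hv).trans_le ?_⟩
  refine sum_le_sum_filter_of_nonpos_of_nonneg (fun t ht hnW ↦ ?_) (by grind)
  have := hTS t ht
  grind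

end Augmentation

end HasDegreeFactor

open HasDegreeFactor in
theorem abFactor_iff_general {V : Type*} [Fintype V] [DecidableEq V]
    (G : SimpleGraph V) [DecidableRel G.Adj] {g f : V → ℕ} (hgf : ∀ v, g v < f v) :
    HasDegreeFactor G g f ↔ ∀ S : Finset V,
      ∑ v with v ∉ S ∧ #(G.neighborFinset v \ S) < g v,
        ((g v : ℤ) - #(G.neighborFinset v \ S)) ≤ ∑ v ∈ S, (f v : ℤ) := by
  constructor
  · rintro ⟨H, hHG, hH⟩ S
    classical
    exact sum_sub_card_le_sum_of_degree_bounds hHG S _ (fun t _ ↦ (hH t).1) fun s _ ↦ (hH s).2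
  · intro hG
    obtain ⟨H, hH⟩ := exists_minimalFor_of_wellFoundedLT (IsPartialFactor G f) (deficiency g)
      ⟨⊥, bot_le, by simp⟩
    refine ⟨H, hH.prop.le, fun v ↦ ⟨?_, hH.prop.degree_le v⟩⟩
    by_contra! hv
    obtain ⟨S, hS⟩ := exists_sum_lt_sum_sub_card_of_minimalFor hgf hH hv
    exact (hG S).not_gt hS

/-- **Lemma (Heinrich et al.; one-set version of Tutte's `[a,b]`-factor theorem).**
For `b > a ≥ 1`, a graph `G` contains an `[a,b]`-factor iff for every `S ⊆ V(G)`,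
`a|W| - ∑_{v ∈ W} d_{G-S}(v) ≤ b|S|`, where `W = {v ∈ V(G)\S : d_{G-S}(v) < a}`. -/
theorem abFactor_iff (a b : ℕ) (ha : 0 < a) (hab : a < b)
    {V : Type*} [Fintype V] [DecidableEq V]
    (G : SimpleGraph V) [DecidableRel G.Adj] :
    G.HasABFactor a b ↔ ∀ S : Finset V,
      (a : ℤ) * (Finset.univ.filter
          (fun v => v ∉ S ∧ (G.neighborFinset v \ S).card < a)).card -
        ∑ v ∈ Finset.univ.filter
            (fun v => v ∉ S ∧ (G.neighborFinset v \ S).card < a),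
          ((G.neighborFinset v \ S).card : ℤ) ≤ (b : ℤ) * S.card := by
  rw [hasABFactor_iff_hasDegreeFactor, abFactor_iff_general G fun _ ↦ hab]
  simp [sum_sub_distrib, mul_comm]
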